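/- Let 0 < λ ≤ Λ and Λ₀ > 0, and let A : closure(B₁(0)) × ℝ → (3×3 symmetric matrices) be measurable with λ|ξ|² ≤ ξᵀ A(x) ξ ≤ Λ|ξ|² for all x and all ξ ∈ ℝ³. Assume the Poincaré inequality on the unit disk: for every C¹ function w on closure(B₁(0)), ‖w − (average of w over B₁(0))‖_{L²(B₁(0))} ≤ Λ₀ ‖∇w‖_{L²(B₁(0))}. Suppose Φ is C¹ on closure(B₁(0)) × ℝ with ∫_{B₁(0) × ℝ} (A ∇Φ) · ∇ψ dx = 0 for every C¹ function ψ : ℝ³ → ℝ with compact support, and ∫_{B₁(0)} (A ∇Φ)(x′, t) · e₃ dx′ = 0 for every t ∈ ℝ. Then there exists β > 0, depending only on λ, Λ and Λ₀, such that for all real t₁ ≤ t₂ and all h > 0 one has e^{β h} ∫_{B₁(0) × [t₁, t₂]} |∇Φ|² dx ≤ ∫_{B₁(0) × [t₁ − h, t₂ + h]} |∇Φ|² dx. -/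

import Mathlib

open Real Set MeasureTheory

/-- Gradient of a scalar function on ℝ³. -/
noncomputable def grad3 (φ : (Fin 3 → ℝ) → ℝ) (x : Fin 3 → ℝ) : Fin 3 → ℝ :=
  fun i => fderiv ℝ φ x (Pi.single i 1)

/-- Squared Euclidean length of a vector of ℝ³. -/
noncomputable def normSq3 (u : Fin 3 → ℝ) : ℝ := ∑ i, (u i) ^ 2

/-- The open unit disk in ℝ². -/
def diskSet : Set (Fin 2 → ℝ) := {x' | (x' 0) ^ 2 + (x' 1) ^ 2 < 1}

/-- The open infinite cylinder B₁(0) × ℝ ⊂ ℝ³. -/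
def cylZ : Set (Fin 3 → ℝ) := {y | (y 0) ^ 2 + (y 1) ^ 2 < 1}

/-- The closed infinite cylinder closure(B₁(0)) × ℝ ⊂ ℝ³. -/
def cylZc : Set (Fin 3 → ℝ) := {y | (y 0) ^ 2 + (y 1) ^ 2 ≤ 1}

/-- The point of ℝ³ over `x'` at height `t`. -/
def jn (x' : Fin 2 → ℝ) (t : ℝ) : Fin 3 → ℝ := ![x' 0, x' 1, t]

lemma snoc_eq_jn (x' : Fin 2 → ℝ) (t : ℝ) : (Fin.snoc x' t : Fin 3 → ℝ) = jn x' t := by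
  ext i; fin_cases i <;> rfl

lemma isOpen_cylZ : IsOpen cylZ := by
  unfold cylZ; exact isOpen_lt (by fun_prop) (by fun_prop)

lemma isOpen_disk : IsOpen diskSet := by
  unfold diskSet; exact isOpen_lt (by fun_prop) (by fun_prop)

lemma isClosed_cylZc : IsClosed cylZc := by
  unfold cylZc; exact isClosed_le (by fun_prop) (by fun_prop)

lemma cylZ_sub : cylZ ⊆ cylZc := fun x hx => le_of_lt (show (x 0) ^ 2 + (x 1) ^ 2 < 1 from hx)

lemma jn_mem (x' : Fin 2 → ℝ) (t : ℝ) (h : x' ∈ diskSet) : jn x' t ∈ cylZ := h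

lemma continuous_jn (t : ℝ) : Continuous (fun x' => jn x' t) := by
  unfold jn
  refine continuous_pi fun i => ?_
  fin_cases i <;> simp <;> fun_prop

lemma slab_subset (R : ℝ) : cylZc ∩ {x | |x 2| ≤ R} ⊆ Metric.closedBall 0 (max 1 R) := by
  rintro x ⟨hx, hx2⟩
  have h : (x 0) ^ 2 + (x 1) ^ 2 ≤ 1 := hx
  rw [mem_closedBall_zero_iff, pi_norm_le_iff_of_nonneg (by positivity)]
  intro i
  rw [Real.norm_eq_abs]
  fin_cases i
  · exact le_trans (abs_le_one_iff_mul_self_le_one.2 (by simp; nlinarith [sq_nonneg (x 1)])) (le_max_left _ _)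
  · exact le_trans (abs_le_one_iff_mul_self_le_one.2 (by simp; nlinarith [sq_nonneg (x 0)])) (le_max_left _ _)
  · exact le_trans hx2 (le_max_right _ _)

lemma isCompact_slab (R : ℝ) : IsCompact (cylZc ∩ {x | |x 2| ≤ R}) := by
  refine (isCompact_closedBall (0 : Fin 3 → ℝ) (max 1 R)).of_isClosed_subset ?_ (slab_subset R)
  exact isClosed_cylZc.inter (isClosed_le (by fun_prop) (by fun_prop))

lemma convex_cylZc : Convex ℝ cylZc := by
  intro x hx y hy a b ha hb hab
  have hx : (x 0) ^ 2 + (x 1) ^ 2 ≤ 1 := hx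
  have hy : (y 0) ^ 2 + (y 1) ^ 2 ≤ 1 := hy
  show (a * x 0 + b * y 0) ^ 2 + (a * x 1 + b * y 1) ^ 2 ≤ 1
  have hb' : b = 1 - a := by linarith
  subst hb'
  nlinarith [mul_nonneg ha hb, mul_nonneg (mul_nonneg ha hb) (sq_nonneg (x 0 - y 0)),
    mul_nonneg (mul_nonneg ha hb) (sq_nonneg (x 1 - y 1)),
    mul_le_mul_of_nonneg_left hx ha, mul_le_mul_of_nonneg_left hy hb]

lemma uniqueDiff_cylZc : UniqueDiffOn ℝ cylZc := by
  apply uniqueDiffOn_convex convex_cylZc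
  refine ⟨0, ?_⟩
  rw [mem_interior]
  exact ⟨cylZ, cylZ_sub, isOpen_cylZ, by simp [cylZ]⟩

lemma fderiv_eq_within {Φ : (Fin 3 → ℝ) → ℝ} {x : Fin 3 → ℝ} (hx : x ∈ cylZ) :
    fderivWithin ℝ Φ cylZc x = fderiv ℝ Φ x :=
  fderivWithin_of_mem_nhds (Filter.mem_of_superset (isOpen_cylZ.mem_nhds hx) cylZ_sub)

lemma contDiffAt_of_mem {Φ : (Fin 3 → ℝ) → ℝ} (hΦ : ContDiffOn ℝ 1 Φ cylZc) {x : Fin 3 → ℝ}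
    (hx : x ∈ cylZ) : ContDiffAt ℝ 1 Φ x :=
  hΦ.contDiffAt (Filter.mem_of_superset (isOpen_cylZ.mem_nhds hx) cylZ_sub)

lemma exists_bound {Φ : (Fin 3 → ℝ) → ℝ} (hΦ : ContDiffOn ℝ 1 Φ cylZc) (R : ℝ) :
    ∃ M : ℝ, 0 ≤ M ∧ ∀ x ∈ cylZ, |x 2| ≤ R → |Φ x| ≤ M ∧ ∀ i, |grad3 Φ x i| ≤ M := by
  obtain ⟨M1, h1⟩ := (isCompact_slab R).exists_bound_of_continuousOn
    (hΦ.continuousOn.mono inter_subset_left)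
  obtain ⟨M2, h2⟩ := (isCompact_slab R).exists_bound_of_continuousOn
    ((hΦ.continuousOn_fderivWithin uniqueDiff_cylZc le_rfl).mono inter_subset_left)
  refine ⟨max 0 (max M1 M2), le_max_left _ _, fun x hx hR => ⟨?_, fun i => ?_⟩⟩
  · exact (h1 x ⟨cylZ_sub hx, hR⟩).trans ((le_max_left _ _).trans (le_max_right _ _))
  · have h := h2 x ⟨cylZ_sub hx, hR⟩
    rw [fderiv_eq_within hx] at h
    refine le_trans ?_ (h.trans ((le_max_right _ _).trans (le_max_right _ _)))
    have := (fderiv ℝ Φ x).le_opNorm (Pi.single i 1)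
    rwa [Pi.norm_single, norm_one, mul_one] at this

lemma continuousOn_grad3 {Φ : (Fin 3 → ℝ) → ℝ} (hΦ : ContDiffOn ℝ 1 Φ cylZc) (i : Fin 3) :
    ContinuousOn (fun x => grad3 Φ x i) cylZ := by
  have := (hΦ.mono cylZ_sub).continuousOn_fderiv_of_isOpen isOpen_cylZ le_rfl
  exact this.clm_apply continuousOn_const

lemma measurable_grad3 (Φ : (Fin 3 → ℝ) → ℝ) (i : Fin 3) : Measurable (fun x => grad3 Φ x i) :=
  measurable_fderiv_apply_const ℝ Φ _

lemma volume_slab (R : ℝ) : volume (cylZ ∩ {x | |x 2| ≤ R}) < ⊤ :=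
  lt_of_le_of_lt (measure_mono (inter_subset_inter_left _ cylZ_sub)) (isCompact_slab R).measure_lt_top

lemma volume_disk : volume diskSet < ⊤ := by
  refine lt_of_le_of_lt (measure_mono (t := Metric.closedBall 0 1) ?_)
    (isCompact_closedBall _ _).measure_lt_top
  intro x hx
  have h : (x 0) ^ 2 + (x 1) ^ 2 < 1 := hx
  rw [mem_closedBall_zero_iff, pi_norm_le_iff_of_nonneg (by positivity)]
  intro i
  rw [Real.norm_eq_abs]
  fin_cases i
  · exact abs_le_one_iff_mul_self_le_one.2 (by simp; nlinarith [sq_nonneg (x 1)])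
  · exact abs_le_one_iff_mul_self_le_one.2 (by simp; nlinarith [sq_nonneg (x 0)])

lemma integrableOn_bound {F : (Fin 3 → ℝ) → ℝ} {R C : ℝ}
    (hm : AEStronglyMeasurable F (volume.restrict cylZ))
    (hb : ∀ x ∈ cylZ, |x 2| ≤ R → |F x| ≤ C) (h0 : ∀ x ∈ cylZ, R < |x 2| → F x = 0) :
    IntegrableOn F cylZ := by
  have hS : MeasurableSet {x : Fin 3 → ℝ | |x 2| ≤ R} :=
    (isClosed_le (by fun_prop) (by fun_prop)).measurableSet
  have h1 : IntegrableOn F (cylZ ∩ {x | |x 2| ≤ R}) := by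
    have : IsFiniteMeasure (volume.restrict (cylZ ∩ {x : Fin 3 → ℝ | |x 2| ≤ R})) :=
      ⟨by simpa using volume_slab R⟩
    refine Integrable.of_bound (hm.mono_measure (Measure.restrict_mono inter_subset_left le_rfl)) C ?_
    refine (ae_restrict_iff' (isOpen_cylZ.measurableSet.inter hS)).2 (Filter.Eventually.of_forall ?_)
    intro x hx
    exact hb x hx.1 hx.2
  refine IntegrableOn.of_forall_sdiff_eq_zero h1 isOpen_cylZ.measurableSet ?_
  intro x hx
  refine h0 x hx.1 ?_
  by_contra hcon
  exact hx.2 ⟨hx.1, not_lt.1 hcon⟩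

lemma fubini_cyl {F : (Fin 3 → ℝ) → ℝ} (hF : IntegrableOn F cylZ) :
    (∫ x in cylZ, F x = ∫ t : ℝ, ∫ x' in diskSet, F (jn x' t)) ∧
      Integrable (fun t : ℝ => ∫ x' in diskSet, F (jn x' t)) := by
  set e := MeasurableEquiv.piFinSuccAbove (fun _ : Fin 3 => ℝ) (Fin.last 2) with he
  have mp := (volume_preserving_piFinSuccAbove (fun _ : Fin 3 => ℝ) (Fin.last 2)).symm
  have hes : ∀ p : ℝ × (Fin 2 → ℝ), e.symm p = jn p.2 p.1 := by
    intro p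
    ext i
    fin_cases i <;> rfl
  have hpre : e.symm ⁻¹' cylZ = univ ×ˢ diskSet := by
    ext p
    simp only [mem_preimage, hes, mem_prod, mem_univ, true_and]
    exact Iff.rfl
  have h1 : ∫ x in cylZ, F x = ∫ p in (univ ×ˢ diskSet : Set (ℝ × (Fin 2 → ℝ))), F (jn p.2 p.1) := by
    rw [← hpre, ← mp.setIntegral_preimage_emb e.symm.measurableEmbedding]
    simp only [← hes]; rfl
  have h2 : IntegrableOn (fun p : ℝ × (Fin 2 → ℝ) => F (jn p.2 p.1)) (univ ×ˢ diskSet) := by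
    rw [← hpre]
    have := (mp.integrableOn_comp_preimage e.symm.measurableEmbedding (f := F) (s := cylZ)).2 hF
    refine this.congr_fun ?_ (e.symm.measurable isOpen_cylZ.measurableSet)
    intro p _
    simp [← hes]; rfl
  rw [IntegrableOn, Measure.volume_eq_prod, ← Measure.prod_restrict, Measure.restrict_univ] at h2
  constructor
  · rw [h1, Measure.volume_eq_prod, ← Measure.prod_restrict, Measure.restrict_univ,
      integral_prod _ h2]
  · exact h2.integral_prod_left

lemma A_bound {lam Lam : ℝ} (hlam : 0 < lam) (a : Fin 3 → Fin 3 → ℝ)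
    (hs : ∀ i j, a i j = a j i)
    (hE : ∀ ξ : Fin 3 → ℝ, lam * normSq3 ξ ≤ ∑ i, ∑ j, ξ i * a i j * ξ j ∧
        ∑ i, ∑ j, ξ i * a i j * ξ j ≤ Lam * normSq3 ξ) : ∀ i j, |a i j| ≤ Lam := by
  have e0 := hE ![1, 0, 0]
  have e1 := hE ![0, 1, 0]
  have e2 := hE ![0, 0, 1]
  have e3 := hE ![1, 1, 0]
  have e4 := hE ![1, -1, 0]
  have e5 := hE ![1, 0, 1]
  have e6 := hE ![1, 0, -1]
  have e7 := hE ![0, 1, 1]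
  have e8 := hE ![0, 1, -1]
  have s1 := hs 0 1
  have s2 := hs 0 2
  have s3 := hs 1 2
  simp [normSq3, Fin.sum_univ_three] at e0 e1 e2 e3 e4 e5 e6 e7 e8
  intro i j
  rw [abs_le]
  fin_cases i <;> fin_cases j <;> simp <;> constructor <;> linarith

lemma Av_bound {Lam M : ℝ} (a : Fin 3 → Fin 3 → ℝ) (ha : ∀ i j, |a i j| ≤ Lam)
    (v : Fin 3 → ℝ) (hv : ∀ i, |v i| ≤ M) (i : Fin 3) :
    |∑ j, a i j * v j| ≤ 3 * (Lam * M) := by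
  refine (Finset.abs_sum_le_sum_abs _ _).trans ?_
  have : ∀ j, |a i j * v j| ≤ Lam * M := fun j => by
    rw [abs_mul]
    exact mul_le_mul (ha i j) (hv j) (abs_nonneg _) ((abs_nonneg _).trans (ha i j))
  rw [Fin.sum_univ_three]
  linarith [this 0, this 1, this 2]

lemma Av_sq_bound {Lam : ℝ} (a : Fin 3 → Fin 3 → ℝ) (ha : ∀ i j, |a i j| ≤ Lam)
    (v : Fin 3 → ℝ) (i : Fin 3) :
    (∑ j, a i j * v j) ^ 2 ≤ (3 * Lam) ^ 2 * normSq3 v := by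
  have hL : 0 ≤ Lam := (abs_nonneg _).trans (ha 0 0)
  have h1 := Finset.sum_mul_sq_le_sq_mul_sq Finset.univ (fun j => a i j) v
  refine h1.trans ?_
  unfold normSq3
  refine mul_le_mul_of_nonneg_right ?_ (Finset.sum_nonneg fun _ _ => sq_nonneg _)
  have : ∀ j, (a i j) ^ 2 ≤ Lam ^ 2 := fun j => by
    rw [← sq_abs]; exact pow_le_pow_left₀ (abs_nonneg _) (ha i j) 2
  rw [Fin.sum_univ_three]
  nlinarith [this 0, this 1, this 2]

/-- The weak form holds for test functions that are `C¹` near the closed cylinder. -/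
lemma weak_ext {V : (Fin 3 → ℝ) → Fin 3 → ℝ}
    (hw : ∀ ψ : (Fin 3 → ℝ) → ℝ, ContDiff ℝ 1 ψ → HasCompactSupport ψ →
        ∫ x in cylZ, ∑ i, V x i * grad3 ψ x i = 0)
    {ρ R : ℝ} (hρ : 1 < ρ) {ψ : (Fin 3 → ℝ) → ℝ}
    (hψ : ∀ x : Fin 3 → ℝ, (x 0) ^ 2 + (x 1) ^ 2 < ρ → ContDiffAt ℝ 1 ψ x)
    (h0 : ∀ x : Fin 3 → ℝ, R < |x 2| → ψ x = 0) :
    ∫ x in cylZ, ∑ i, V x i * grad3 ψ x i = 0 := by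
  set σ := (1 + ρ) / 2 with hσ
  have hσ1 : 1 < σ := by rw [hσ]; linarith
  have hσρ : σ < ρ := by rw [hσ]; linarith
  set χ : (Fin 3 → ℝ) → ℝ :=
    fun x => Real.smoothTransition ((σ - ((x 0) ^ 2 + (x 1) ^ 2)) / (σ - 1)) with hχ
  have hχc : ContDiff ℝ 1 χ := by
    refine (Real.smoothTransition.contDiff (n := 1)).comp ?_
    fun_prop
  have hχ0 : ∀ x : Fin 3 → ℝ, σ ≤ (x 0) ^ 2 + (x 1) ^ 2 → χ x = 0 := fun x hx =>
    Real.smoothTransition.zero_of_nonpos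
      (div_nonpos_of_nonpos_of_nonneg (by linarith) (by linarith))
  have hχ1 : ∀ x ∈ cylZ, χ x = 1 := fun x hx => by
    refine Real.smoothTransition.one_of_one_le ?_
    have hx : (x 0) ^ 2 + (x 1) ^ 2 < 1 := hx
    rw [le_div_iff₀ (by linarith)]
    linarith
  have key := hw (fun x => χ x * ψ x) ?_ ?_
  · rw [← key]
    refine setIntegral_congr_fun isOpen_cylZ.measurableSet fun x hx => ?_
    have : (fun x => χ x * ψ x) =ᶠ[nhds x] ψ := by
      filter_upwards [isOpen_cylZ.mem_nhds hx] with y hy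
      rw [hχ1 y hy, one_mul]
    simp only [grad3, this.fderiv_eq]
  · rw [contDiff_iff_contDiffAt]
    intro x
    by_cases hx : (x 0) ^ 2 + (x 1) ^ 2 < ρ
    · exact hχc.contDiffAt.mul (hψ x hx)
    · have : (fun x => χ x * ψ x) =ᶠ[nhds x] fun _ => 0 := by
        have ho : IsOpen {y : Fin 3 → ℝ | σ < (y 0) ^ 2 + (y 1) ^ 2} :=
          isOpen_lt (by fun_prop) (by fun_prop)
        filter_upwards [ho.mem_nhds (show σ < (x 0) ^ 2 + (x 1) ^ 2 by linarith)] with y hy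
        rw [hχ0 y (le_of_lt hy), zero_mul]
      exact contDiffAt_const.congr_of_eventuallyEq this
  · refine HasCompactSupport.intro (isCompact_closedBall (0 : Fin 3 → ℝ) (max σ R)) ?_
    intro x hx
    by_contra hne
    apply hx
    have h1 : (x 0) ^ 2 + (x 1) ^ 2 < σ := by
      by_contra hc
      exact hne (by rw [hχ0 x (not_lt.1 hc), zero_mul])
    have h2 : |x 2| ≤ R := by
      by_contra hc
      exact hne (by rw [h0 x (not_le.1 hc), mul_zero])
    rw [mem_closedBall_zero_iff,
      pi_norm_le_iff_of_nonneg (le_trans (by linarith) (le_max_left _ _))]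
    intro i
    rw [Real.norm_eq_abs]
    fin_cases i
    · exact le_trans (abs_le_of_sq_le_sq (by simp; nlinarith [sq_nonneg (x 1)]) (by linarith))
        (le_max_left _ _)
    · exact le_trans (abs_le_of_sq_le_sq (by simp; nlinarith [sq_nonneg (x 0)]) (by linarith))
        (le_max_left _ _)
    · exact le_trans h2 (le_max_right _ _)

/-- Horizontal scaling. -/
noncomputable def scl (r : ℝ) : (Fin 3 → ℝ) →L[ℝ] (Fin 3 → ℝ) :=
  ContinuousLinearMap.pi fun i => (if i = 2 then (1 : ℝ) else r) •
    ContinuousLinearMap.proj (R := ℝ) (φ := fun _ : Fin 3 => ℝ) i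

lemma scl_apply (r : ℝ) (x : Fin 3 → ℝ) (i : Fin 3) :
    scl r x i = (if i = 2 then (1 : ℝ) else r) * x i := by
  unfold scl
  rw [ContinuousLinearMap.pi_apply]
  rfl

lemma scl_single (r : ℝ) (i : Fin 3) :
    scl r (Pi.single i 1) = (if i = 2 then (1 : ℝ) else r) • Pi.single i 1 := by
  ext j
  rw [scl_apply]
  by_cases h : j = i
  · subst h; simp
  · simp [h]

lemma scl_mem {r : ℝ} (h0 : 0 < r) (h1 : r < 1) {x : Fin 3 → ℝ}
    (hx : (x 0) ^ 2 + (x 1) ^ 2 < 1 / r ^ 2) : scl r x ∈ cylZ := by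
  show (scl r x 0) ^ 2 + (scl r x 1) ^ 2 < 1
  rw [lt_div_iff₀ (by positivity)] at hx
  have a0 : scl r x 0 = r * x 0 := by rw [scl_apply]; simp
  have a1 : scl r x 1 = r * x 1 := by rw [scl_apply]; simp
  rw [a0, a1]
  nlinarith

lemma scl_mem_of_mem {r : ℝ} (h0 : 0 < r) (h1 : r < 1) {x : Fin 3 → ℝ} (hx : x ∈ cylZ) :
    scl r x ∈ cylZ := by
  refine scl_mem h0 h1 (lt_trans hx ?_)
  rw [lt_div_iff₀ (by positivity)]
  nlinarith

lemma grad3_test {Φ : (Fin 3 → ℝ) → ℝ} (hΦ : ContDiffOn ℝ 1 Φ cylZc) {η : ℝ → ℝ}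
    (hη : ContDiff ℝ 1 η) {r : ℝ} (h0 : 0 < r) (h1 : r < 1) {x : Fin 3 → ℝ} (hx : x ∈ cylZ)
    (i : Fin 3) :
    grad3 (fun y => Φ (scl r y) * η (y 2)) x i =
      Φ (scl r x) * (deriv η (x 2) * (if i = 2 then 1 else 0)) +
      η (x 2) * ((if i = 2 then (1 : ℝ) else r) * grad3 Φ (scl r x) i) := by
  have d1 : HasFDerivAt Φ (fderiv ℝ Φ (scl r x)) (scl r x) :=
    ((contDiffAt_of_mem hΦ (scl_mem_of_mem h0 h1 hx)).differentiableAt one_ne_zero).hasFDerivAt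
  have d2 := d1.comp x (scl r).hasFDerivAt
  have d3 : HasFDerivAt (fun y : Fin 3 → ℝ => y 2)
      (ContinuousLinearMap.proj (R := ℝ) (φ := fun _ : Fin 3 => ℝ) 2) x :=
    (ContinuousLinearMap.proj (R := ℝ) (φ := fun _ : Fin 3 => ℝ) 2).hasFDerivAt
  have d4 := ((hη.differentiable one_ne_zero (x 2)).hasDerivAt).comp_hasFDerivAt x d3
  have d5 := d2.mul d4
  have : grad3 (fun y => Φ (scl r y) * η (y 2)) x i = _ :=
    congrArg (fun L : (Fin 3 → ℝ) →L[ℝ] ℝ => L (Pi.single i 1)) d5.fderiv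
  rw [this]
  simp only [add_apply, smul_apply, ContinuousLinearMap.comp_apply, scl_single, map_smul,
    ContinuousLinearMap.proj_apply, Function.comp, smul_eq_mul, grad3, Pi.single_apply]
  simp [eq_comm]

lemma tendsto_scl (x : Fin 3 → ℝ) :
    Filter.Tendsto (fun n : ℕ => scl (1 - 1 / ((n : ℝ) + 2)) x) Filter.atTop (nhds x) := by
  have hr : Filter.Tendsto (fun n : ℕ => (1 : ℝ) - 1 / ((n : ℝ) + 2)) Filter.atTop (nhds 1) := by
    have h := (tendsto_one_div_add_atTop_nhds_zero_nat (𝕜 := ℝ)).comp (Filter.tendsto_add_atTop_nat 1)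
    have h2 := h.const_sub (1 : ℝ)
    simp only [sub_zero] at h2
    refine h2.congr fun n => ?_
    simp only [Function.comp]
    push_cast
    ring_nf
  rw [tendsto_pi_nhds]
  intro i
  simp only [scl_apply]
  by_cases h : i = 2
  · simp [h]
  · simp only [h, if_false]
    simpa using hr.mul_const (x i)

/-- Testing with `Φ η(x₃)`. -/
lemma tested {Lam : ℝ} {A : (Fin 3 → ℝ) → Fin 3 → Fin 3 → ℝ} {Φ : (Fin 3 → ℝ) → ℝ}
    (hA : Measurable A) (hAb : ∀ x ∈ cylZ, ∀ i j, |A x i j| ≤ Lam)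
    (hΦ : ContDiffOn ℝ 1 Φ cylZc)
    (hw : ∀ ψ : (Fin 3 → ℝ) → ℝ, ContDiff ℝ 1 ψ → HasCompactSupport ψ →
        ∫ x in cylZ, ∑ i, (∑ j, A x i j * grad3 Φ x j) * grad3 ψ x i = 0)
    {η : ℝ → ℝ} (hη : ContDiff ℝ 1 η) {R : ℝ} (hR : ∀ t, R < |t| → η t = 0 ∧ deriv η t = 0) :
    ∫ x in cylZ, (η (x 2) * (∑ i, (∑ j, A x i j * grad3 Φ x j) * grad3 Φ x i) +
      deriv η (x 2) * (Φ x * ∑ j, A x 2 j * grad3 Φ x j)) = 0 := by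
  obtain ⟨M, hM0, hM⟩ := exists_bound hΦ R
  have hL0 : 0 ≤ Lam := (abs_nonneg _).trans (hAb 0 (by simp [cylZ]) 0 0)
  obtain ⟨E, hE⟩ := (isCompact_Icc (a := -R) (b := R)).exists_bound_of_continuousOn
    hη.continuous.continuousOn
  obtain ⟨E', hE'⟩ := (isCompact_Icc (a := -R) (b := R)).exists_bound_of_continuousOn
    (hη.continuous_deriv le_rfl).continuousOn
  set r : ℕ → ℝ := fun n => 1 - 1 / ((n : ℝ) + 2) with hr
  have hr0 : ∀ n, 0 < r n := fun n => by
    have : 1 / ((n : ℝ) + 2) < 1 := by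
      rw [div_lt_one (by positivity)]; linarith [(Nat.cast_nonneg n : (0 : ℝ) ≤ n)]
    simp only [hr]; linarith
  have hr1 : ∀ n, r n < 1 := fun n => by
    have : 0 < 1 / ((n : ℝ) + 2) := by positivity
    simp only [hr]; linarith
  set ψ : ℕ → (Fin 3 → ℝ) → ℝ := fun n y => Φ (scl (r n) y) * η (y 2) with hψ
  have hz : ∀ n, ∫ x in cylZ, ∑ i, (∑ j, A x i j * grad3 Φ x j) * grad3 (ψ n) x i = 0 := by
    intro n
    refine weak_ext (V := fun x i => ∑ j, A x i j * grad3 Φ x j) hw (ρ := 1 / (r n) ^ 2) (R := R)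
      ?_ ?_ ?_
    · rw [lt_div_iff₀ (pow_pos (hr0 n) 2)]
      nlinarith [hr0 n, hr1 n]
    · intro x hx
      refine ContDiffAt.mul ?_ ?_
      · exact (contDiffAt_of_mem hΦ (scl_mem (hr0 n) (hr1 n) hx)).comp x
          (scl (r n)).contDiff.contDiffAt
      · exact (hη.comp (contDiff_apply ℝ ℝ (2 : Fin 3))).contDiffAt
    · intro x hx
      simp [hψ, (hR _ hx).1]
  have hVm : ∀ i, Measurable (fun x => ∑ j, A x i j * grad3 Φ x j) := fun i =>
    Finset.measurable_sum _ fun j _ =>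
      ((measurable_pi_apply j).comp ((measurable_pi_apply i).comp hA)).mul (measurable_grad3 Φ j)
  set S : Set (Fin 3 → ℝ) := {x | |x 2| ≤ R} with hS
  have hSm : MeasurableSet S := (isClosed_le (by fun_prop) (by fun_prop)).measurableSet
  set C : ℝ := 3 * (3 * (Lam * M) * (M * E' + E * M)) with hC
  have hlim := tendsto_integral_filter_of_dominated_convergence (μ := volume.restrict cylZ)
    (l := Filter.atTop)
    (F := fun (n : ℕ) x => ∑ i, (∑ j, A x i j * grad3 Φ x j) * grad3 (ψ n) x i)
    (f := fun x => η (x 2) * (∑ i, (∑ j, A x i j * grad3 Φ x j) * grad3 Φ x i) +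
      deriv η (x 2) * (Φ x * ∑ j, A x 2 j * grad3 Φ x j))
    (S.indicator fun _ => C) ?_ ?_ ?_ ?_
  · simp only [hz] at hlim
    exact tendsto_nhds_unique hlim tendsto_const_nhds
  · refine Filter.Eventually.of_forall fun n => Measurable.aestronglyMeasurable ?_
    exact Finset.measurable_sum _ fun i _ => (hVm i).mul (measurable_grad3 (ψ n) i)
  · refine Filter.Eventually.of_forall fun n => ?_
    refine (ae_restrict_iff' isOpen_cylZ.measurableSet).2 (Filter.Eventually.of_forall ?_)
    intro x hx
    by_cases hxS : |x 2| ≤ R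
    · rw [indicator_of_mem (show x ∈ S from hxS), Real.norm_eq_abs]
      have hs2 : |scl (r n) x 2| ≤ R := by rw [scl_apply]; simpa using hxS
      obtain ⟨b1, b2⟩ := hM _ (scl_mem_of_mem (hr0 n) (hr1 n) hx) hs2
      have e1 : |η (x 2)| ≤ E := hE _ (abs_le.1 hxS)
      have e2 : |deriv η (x 2)| ≤ E' := hE' _ (abs_le.1 hxS)
      have E0 := (abs_nonneg _).trans e1
      have E0' := (abs_nonneg _).trans e2
      have hterm : ∀ i, |(∑ j, A x i j * grad3 Φ x j) * grad3 (ψ n) x i| ≤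
          3 * (Lam * M) * (M * E' + E * M) := by
        intro i
        rw [abs_mul]
        refine mul_le_mul (Av_bound _ (hAb x hx) _ (hM x hx hxS).2 i) ?_ (abs_nonneg _)
          (by positivity)
        rw [hψ, grad3_test hΦ hη (hr0 n) (hr1 n) hx]
        refine (abs_add_le _ _).trans (add_le_add ?_ ?_)
        · rw [abs_mul]
          refine mul_le_mul b1 ?_ (abs_nonneg _) hM0
          rw [abs_mul]
          split_ifs <;> simp [e2, E0']
        · rw [abs_mul]
          refine mul_le_mul e1 ?_ (abs_nonneg _) E0
          rw [abs_mul]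
          have : |if i = 2 then (1 : ℝ) else r n| ≤ 1 := by
            split_ifs
            · simp
            · rw [abs_of_pos (hr0 n)]; exact (hr1 n).le
          calc _ ≤ 1 * M := mul_le_mul this (b2 i) (abs_nonneg _) zero_le_one
            _ = M := one_mul _
      refine (Finset.abs_sum_le_sum_abs _ _).trans ?_
      rw [Fin.sum_univ_three, hC]
      linarith [hterm 0, hterm 1, hterm 2]
    · rw [indicator_of_notMem (show x ∉ S from hxS)]
      have h := hR _ (not_le.1 hxS)
      have : ∀ i, grad3 (ψ n) x i = 0 := fun i => by
        rw [hψ, grad3_test hΦ hη (hr0 n) (hr1 n) hx, h.1, h.2]; simp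
      simp [this]
  · rw [integrable_indicator_iff hSm, IntegrableOn, Measure.restrict_restrict hSm]
    refine integrableOn_const (by rw [inter_comm]; exact (volume_slab R).ne) (by simp)
  · refine (ae_restrict_iff' isOpen_cylZ.measurableSet).2 (Filter.Eventually.of_forall ?_)
    intro x hx
    have t1 : Filter.Tendsto (fun n => Φ (scl (r n) x)) Filter.atTop (nhds (Φ x)) :=
      (contDiffAt_of_mem hΦ hx).continuousAt.tendsto.comp (tendsto_scl x)
    have t2 : ∀ i, Filter.Tendsto (fun n => grad3 Φ (scl (r n) x) i) Filter.atTop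
        (nhds (grad3 Φ x i)) := fun i =>
      ((continuousOn_grad3 hΦ i).continuousAt (isOpen_cylZ.mem_nhds hx)).tendsto.comp
        (tendsto_scl x)
    have t3 : Filter.Tendsto r Filter.atTop (nhds 1) := by
      have := (tendsto_pi_nhds.1 (tendsto_scl (fun _ => 1))) 0
      simpa [scl_apply, hr] using this
    have t4 : ∀ i : Fin 3, Filter.Tendsto (fun n => grad3 (ψ n) x i) Filter.atTop
        (nhds (Φ x * (deriv η (x 2) * (if i = 2 then 1 else 0)) + η (x 2) * grad3 Φ x i)) := by
      intro i
      have : ∀ n, grad3 (ψ n) x i = _ := fun n => grad3_test hΦ hη (hr0 n) (hr1 n) hx i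
      simp only [this]
      refine (t1.mul_const _).add (Filter.Tendsto.const_mul _ ?_)
      have t5 : Filter.Tendsto (fun n => if i = 2 then (1 : ℝ) else r n) Filter.atTop (nhds 1) := by
        split_ifs
        · exact tendsto_const_nhds
        · exact t3
      simpa using t5.mul (t2 i)
    have t6 := tendsto_finsetSum Finset.univ fun i (_ : i ∈ Finset.univ) =>
      (t4 i).const_mul (∑ j, A x i j * grad3 Φ x j)
    convert t6 using 2
    simp [Fin.sum_univ_three]
    ring

lemma hasDerivAt_q (u : ℝ) : HasDerivAt (fun u : ℝ => (max u 0) ^ 2) (2 * max u 0) u := by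
  rcases lt_trichotomy u 0 with h | h | h
  · rw [max_eq_right h.le, mul_zero]
    refine (hasDerivAt_const u (0 : ℝ)).congr_of_eventuallyEq ?_
    filter_upwards [Iio_mem_nhds h] with y hy
    rw [max_eq_right (le_of_lt hy)]; simp
  · subst h
    rw [← hasDerivWithinAt_univ, ← Iic_union_Ici (a := (0 : ℝ))]
    refine HasDerivWithinAt.union ?_ ?_
    · simp only [max_self, mul_zero]
      refine (hasDerivWithinAt_const (0 : ℝ) (Iic 0) (0 : ℝ)).congr ?_ (by simp)
      intro y hy
      rw [max_eq_right hy]; simp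
    · have h2 : HasDerivWithinAt (fun u : ℝ => u ^ 2) (2 * max (0 : ℝ) 0) (Ici 0) 0 := by
        simpa using (hasDerivAt_pow 2 (0 : ℝ)).hasDerivWithinAt
      refine h2.congr ?_ (by simp)
      intro y hy
      rw [max_eq_left hy]
  · rw [max_eq_left h.le]
    have h2 : HasDerivAt (fun u : ℝ => u ^ 2) (2 * u) u := by
      simpa using hasDerivAt_pow 2 u
    refine h2.congr_of_eventuallyEq ?_
    filter_upwards [Ioi_mem_nhds h] with y hy
    rw [max_eq_left (le_of_lt hy)]

/-- A `C¹` step. -/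
noncomputable def stp (s : ℝ) : ℝ :=
  2 * ((max s 0) ^ 2 - 2 * (max (s - 1 / 2) 0) ^ 2 + (max (s - 1) 0) ^ 2)

/-- The derivative of `stp`. -/
noncomputable def stp' (s : ℝ) : ℝ :=
  4 * (max s 0 - 2 * max (s - 1 / 2) 0 + max (s - 1) 0)

lemma hasDerivAt_stp (s : ℝ) : HasDerivAt stp (stp' s) s := by
  have h1 := hasDerivAt_q s
  have h2 : HasDerivAt (fun u : ℝ => (max (u - 1 / 2) 0) ^ 2) (2 * max (s - 1 / 2) 0) s :=
    (hasDerivAt_q (s - 1 / 2)).comp_sub_const s (1 / 2)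
  have h3 : HasDerivAt (fun u : ℝ => (max (u - 1) 0) ^ 2) (2 * max (s - 1) 0) s :=
    (hasDerivAt_q (s - 1)).comp_sub_const s 1
  have h4 := ((h1.sub (h2.const_mul 2)).add h3).const_mul 2
  refine h4.congr_deriv ?_
  unfold stp'; ring

lemma continuous_stp' : Continuous stp' := by
  unfold stp'; fun_prop

lemma stp_of_nonpos {s : ℝ} (h : s ≤ 0) : stp s = 0 ∧ stp' s = 0 := by
  unfold stp stp'
  rw [max_eq_right h, max_eq_right (by linarith), max_eq_right (by linarith)]; simp

lemma stp_of_one_le {s : ℝ} (h : 1 ≤ s) : stp s = 1 ∧ stp' s = 0 := by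
  unfold stp stp'
  rw [max_eq_left (by linarith), max_eq_left (by linarith), max_eq_left (by linarith)]
  constructor <;> ring

lemma stp_bounds (s : ℝ) : 0 ≤ stp s ∧ 0 ≤ stp' s ∧ stp' s ≤ 2 := by
  rcases le_total s 0 with h | h
  · rw [(stp_of_nonpos h).1, (stp_of_nonpos h).2]; norm_num
  rcases le_total 1 s with h1 | h1
  · rw [(stp_of_one_le h1).1, (stp_of_one_le h1).2]; norm_num
  unfold stp stp'
  rw [max_eq_left h, max_eq_right (show s - 1 ≤ 0 by linarith)]
  rcases le_total s (1 / 2) with h2 | h2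
  · rw [max_eq_right (by linarith)]
    refine ⟨by nlinarith, by linarith, by linarith⟩
  · rw [max_eq_left (by linarith)]
    refine ⟨by nlinarith, by linarith, by linarith⟩

lemma exists_weight {β t₁ t₂ h : ℝ} (hβ : 0 < β) (ht : t₁ ≤ t₂) (hh : 0 < h) :
    ∃ η : ℝ → ℝ, ContDiff ℝ 1 η ∧ (∀ t, 0 ≤ η t) ∧
      (∀ t, t₁ ≤ t → t ≤ t₂ → η t = exp (β * h) - 1 ∧ deriv η t = 0) ∧
      (∀ t, (t < t₁ - h ∨ t₂ + h < t) → η t = 0 ∧ deriv η t = 0) ∧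
      (∀ t, |deriv η t| ≤ 2 * β * (η t + 1)) := by
  set u : ℝ → ℝ := fun t => 1 + (t - t₁) / h with hu
  set v : ℝ → ℝ := fun t => 1 + (t₂ - t) / h with hv
  set F : ℝ → ℝ := fun t => β * h * (stp (u t) + stp (v t) - 1) with hF
  set F' : ℝ → ℝ := fun t => β * (stp' (u t) - stp' (v t)) with hF'
  have du : ∀ t, HasDerivAt u (1 / h) t := fun t => by
    exact (((hasDerivAt_id t).sub_const t₁).div_const h).const_add 1
  have dv : ∀ t, HasDerivAt v (-1 / h) t := fun t => by
    exact (((hasDerivAt_id t).const_sub t₂).div_const h).const_add 1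
  have dF : ∀ t, HasDerivAt F (F' t) t := fun t => by
    have h1 := (hasDerivAt_stp (u t)).comp t (du t)
    have h2 := (hasDerivAt_stp (v t)).comp t (dv t)
    refine (((h1.add h2).sub_const 1).const_mul (β * h)).congr_deriv ?_
    simp only [hF']
    field_simp
    ring
  have dη : ∀ t, HasDerivAt (fun t => exp (F t) - 1) (exp (F t) * F' t) t := fun t =>
    ((dF t).exp).sub_const 1
  have cF : Continuous F := continuous_iff_continuousAt.2 fun t => (dF t).continuousAt
  have cF' : Continuous F' := by
    have cu : Continuous u := by simp only [hu]; fun_prop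
    have cv : Continuous v := by simp only [hv]; fun_prop
    exact continuous_const.mul ((continuous_stp'.comp cu).sub (continuous_stp'.comp cv))
  have hd : deriv (fun t => exp (F t) - 1) = fun t => exp (F t) * F' t :=
    funext fun t => (dη t).deriv
  have u1 : ∀ t, t₁ ≤ t → 1 ≤ u t := fun t h' => by
    have : 0 ≤ (t - t₁) / h := div_nonneg (by linarith) hh.le
    simp only [hu]; linarith
  have v1 : ∀ t, t ≤ t₂ → 1 ≤ v t := fun t h' => by
    have : 0 ≤ (t₂ - t) / h := div_nonneg (by linarith) hh.le
    simp only [hv]; linarith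
  refine ⟨fun t => exp (F t) - 1, ?_, ?_, ?_, ?_, ?_⟩
  · rw [contDiff_one_iff_deriv]
    refine ⟨fun t => (dη t).differentiableAt, ?_⟩
    rw [hd]
    exact (Real.continuous_exp.comp cF).mul cF'
  · intro t
    have : 0 ≤ F t := by
      refine mul_nonneg (by positivity) ?_
      rcases le_total t₁ t with h' | h'
      · rw [(stp_of_one_le (u1 t h')).1]; linarith [(stp_bounds (v t)).1]
      · rw [(stp_of_one_le (v1 t (h'.trans ht))).1]; linarith [(stp_bounds (u t)).1]
    simpa using this
  · intro t h1 h2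
    rw [hd]
    simp only [hF, hF', (stp_of_one_le (u1 t h1)).1, (stp_of_one_le (u1 t h1)).2,
      (stp_of_one_le (v1 t h2)).1, (stp_of_one_le (v1 t h2)).2]
    norm_num
  · intro t hc
    rw [hd]
    rcases hc with hc | hc
    · have a1 : u t ≤ 0 := by
        have : (t - t₁) / h ≤ -1 := by rw [div_le_iff₀ hh]; linarith
        simp only [hu]; linarith
      have a2 := v1 t (by linarith)
      simp only [hF, hF', (stp_of_nonpos a1).1, (stp_of_nonpos a1).2,
        (stp_of_one_le a2).1, (stp_of_one_le a2).2]
      norm_num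
    · have a1 : v t ≤ 0 := by
        have : (t₂ - t) / h ≤ -1 := by rw [div_le_iff₀ hh]; linarith
        simp only [hv]; linarith
      have a2 := u1 t (by linarith)
      simp only [hF, hF', (stp_of_nonpos a1).1, (stp_of_nonpos a1).2,
        (stp_of_one_le a2).1, (stp_of_one_le a2).2]
      norm_num
  · intro t
    rw [hd]
    simp only [sub_add_cancel]
    rw [abs_mul, abs_of_pos (exp_pos _), mul_comm]
    refine mul_le_mul_of_nonneg_right ?_ (exp_pos _).le
    simp only [hF', abs_mul, abs_of_pos hβ]
    have : |stp' (u t) - stp' (v t)| ≤ 2 := by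
      rw [abs_le]
      constructor <;> linarith [(stp_bounds (u t)).2.1, (stp_bounds (u t)).2.2,
        (stp_bounds (v t)).2.1, (stp_bounds (v t)).2.2]
    nlinarith

lemma integrableOn_disk {f : (Fin 2 → ℝ) → ℝ} {C : ℝ}
    (hm : AEStronglyMeasurable f (volume.restrict diskSet))
    (hb : ∀ x ∈ diskSet, |f x| ≤ C) : IntegrableOn f diskSet := by
  have : IsFiniteMeasure (volume.restrict diskSet) := ⟨by simpa using volume_disk⟩
  refine Integrable.of_bound hm C ?_
  exact (ae_restrict_iff' isOpen_disk.measurableSet).2 (Filter.Eventually.of_forall hb)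

/-- The linear part of `jn`. -/
noncomputable def jnL : (Fin 2 → ℝ) →L[ℝ] (Fin 3 → ℝ) :=
  ContinuousLinearMap.pi ![ContinuousLinearMap.proj (R := ℝ) (φ := fun _ : Fin 2 => ℝ) 0,
    ContinuousLinearMap.proj (R := ℝ) (φ := fun _ : Fin 2 => ℝ) 1, 0]

lemma jn_eq (x' : Fin 2 → ℝ) (t : ℝ) : jn x' t = jnL x' + jn 0 t := by
  ext i
  fin_cases i <;> simp [jn, jnL]

lemma jnL_single (i : Fin 2) : jnL (Pi.single i 1) = Pi.single (Fin.castSucc i) 1 := by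
  ext k
  fin_cases i <;> fin_cases k <;> simp [jnL]

lemma hasFDerivAt_jn (x' : Fin 2 → ℝ) (t : ℝ) : HasFDerivAt (fun y => jn y t) jnL x' := by
  have : (fun y => jn y t) = fun y => jnL y + jn 0 t := funext fun y => jn_eq y t
  rw [this]
  exact jnL.hasFDerivAt.add_const _

lemma normSq3_le {v : Fin 3 → ℝ} {M : ℝ} (hv : ∀ i, |v i| ≤ M) : |normSq3 v| ≤ 3 * M ^ 2 := by
  have : ∀ j, (v j) ^ 2 ≤ M ^ 2 := fun j => by
    rw [← sq_abs]; exact pow_le_pow_left₀ (abs_nonneg _) (hv j) 2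
  rw [abs_of_nonneg (Finset.sum_nonneg fun _ _ => sq_nonneg _), normSq3, Fin.sum_univ_three]
  linarith [this 0, this 1, this 2]

lemma measurable_normSq3 (Φ : (Fin 3 → ℝ) → ℝ) : Measurable (fun x => normSq3 (grad3 Φ x)) :=
  Finset.measurable_sum _ fun i _ => (measurable_grad3 Φ i).pow_const 2

lemma slice {Lam Λ₀ : ℝ} (hLam : 0 < Lam) (hΛ₀ : 0 < Λ₀)
    (hPoincare : ∀ w : (Fin 2 → ℝ) → ℝ, ContDiffOn ℝ 1 w (closure diskSet) →
      ∫ x' in diskSet,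
          (w x' - (∫ y' in diskSet, w y') / (volume diskSet).toReal) ^ 2
        ≤ Λ₀ ^ 2 * ∫ x' in diskSet, ∑ i, (fderiv ℝ w x' (Pi.single i 1)) ^ 2)
    {A : (Fin 3 → ℝ) → Fin 3 → Fin 3 → ℝ} {Φ : (Fin 3 → ℝ) → ℝ}
    (hA : Measurable A) (hAb : ∀ x ∈ cylZ, ∀ i j, |A x i j| ≤ Lam)
    (hΦ : ContDiffOn ℝ 1 Φ cylZc) (t : ℝ)
    (hflux : ∫ x' in diskSet, ∑ j, A (jn x' t) 2 j * grad3 Φ (jn x' t) j = 0) :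
    |∫ x' in diskSet, Φ (jn x' t) * ∑ j, A (jn x' t) 2 j * grad3 Φ (jn x' t) j| ≤
      3 * Lam * Λ₀ * ∫ x' in diskSet, normSq3 (grad3 Φ (jn x' t)) := by
  obtain ⟨M, hM0, hM⟩ := exists_bound hΦ |t|
  have hM' : ∀ x' ∈ diskSet, |Φ (jn x' t)| ≤ M ∧ ∀ i, |grad3 Φ (jn x' t) i| ≤ M := fun x' hx =>
    hM _ (jn_mem x' t hx) le_rfl
  set w : (Fin 2 → ℝ) → ℝ := fun x' => Φ (jn x' t) with hw
  set f : (Fin 2 → ℝ) → ℝ := fun x' => ∑ j, A (jn x' t) 2 j * grad3 Φ (jn x' t) j with hf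
  set g : (Fin 2 → ℝ) → ℝ := fun x' => normSq3 (grad3 Φ (jn x' t)) with hg
  set m : ℝ := (∫ y' in diskSet, w y') / (volume diskSet).toReal with hm
  have cw : ContDiffOn ℝ 1 w (closure diskSet) := by
    refine hΦ.comp (t := cylZc) (f := fun x' => jn x' t) ?_ ?_
    · have : (fun y => jn y t) = fun y => jnL y + jn 0 t := funext fun y => jn_eq y t
      rw [this]
      exact (jnL.contDiff.add contDiff_const).contDiffOn
    · have hcl : IsClosed ((fun x' => jn x' t) ⁻¹' cylZc) :=
        isClosed_cylZc.preimage (continuous_jn t)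
      exact closure_minimal (fun x hx => cylZ_sub (jn_mem x t hx)) hcl
  have hP := hPoincare w cw
  have hjm : Measurable (fun x' => jn x' t) := (continuous_jn t).measurable
  have mf : Measurable f := by
    refine Finset.measurable_sum _ fun j _ => ?_
    exact ((measurable_pi_apply j).comp ((measurable_pi_apply 2).comp (hA.comp hjm))).mul
      ((measurable_grad3 Φ j).comp hjm)
  have mg : Measurable g := (measurable_normSq3 Φ).comp hjm
  have mw : AEStronglyMeasurable w (volume.restrict diskSet) :=
    (cw.continuousOn.mono subset_closure).aestronglyMeasurable isOpen_disk.measurableSet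
  have bf : ∀ x' ∈ diskSet, |f x'| ≤ 3 * (Lam * M) := fun x' hx =>
    Av_bound _ (hAb _ (jn_mem x' t hx)) _ (hM' x' hx).2 2
  have bwm : ∀ x' ∈ diskSet, |w x' - m| ≤ M + |m| := fun x' hx =>
    (abs_sub _ _).trans (add_le_add (hM' x' hx).1 le_rfl)
  have ifn : IntegrableOn f diskSet := integrableOn_disk mf.aestronglyMeasurable bf
  have ig : IntegrableOn g diskSet := integrableOn_disk mg.aestronglyMeasurable
    fun x' hx => normSq3_le (hM' x' hx).2
  have iwf : IntegrableOn (fun x' => w x' * f x') diskSet := by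
    refine integrableOn_disk (C := M * (3 * (Lam * M))) (mw.mul mf.aestronglyMeasurable) ?_
    intro x' hx
    rw [abs_mul]
    exact mul_le_mul (hM' x' hx).1 (bf x' hx) (abs_nonneg _) hM0
  have iw2 : IntegrableOn (fun x' => (w x' - m) ^ 2) diskSet := by
    refine integrableOn_disk (C := (M + |m|) ^ 2)
      ((mw.sub aestronglyMeasurable_const).pow 2) ?_
    intro x' hx
    rw [abs_pow]
    exact pow_le_pow_left₀ (abs_nonneg _) (bwm x' hx) 2
  have iwmf : IntegrableOn (fun x' => (w x' - m) * f x') diskSet := by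
    have := iwf.sub (ifn.const_mul m)
    refine this.congr_fun (fun x _ => ?_) isOpen_disk.measurableSet
    simp only [Pi.sub_apply]; ring
  have hb : ∫ x' in diskSet, w x' * f x' = ∫ x' in diskSet, (w x' - m) * f x' := by
    have h1 : ∫ x' in diskSet, (w x' - m) * f x' =
        ∫ x' in diskSet, (w x' * f x' - m * f x') := by
      congr 1; ext x; ring
    rw [h1, integral_sub iwf (ifn.const_mul m), integral_const_mul, hflux]
    ring
  have hP2 : ∫ x' in diskSet, (w x' - m) ^ 2 ≤ Λ₀ ^ 2 * ∫ x' in diskSet, g x' := by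
    refine hP.trans (mul_le_mul_of_nonneg_left ?_ (by positivity))
    have hfd : ∀ x' ∈ diskSet, ∀ i, fderiv ℝ w x' (Pi.single i 1) =
        grad3 Φ (jn x' t) (Fin.castSucc i) := by
      intro x' hx i
      have d1 : HasFDerivAt Φ (fderiv ℝ Φ (jn x' t)) (jn x' t) :=
        ((contDiffAt_of_mem hΦ (jn_mem x' t hx)).differentiableAt one_ne_zero).hasFDerivAt
      have d2 : HasFDerivAt w _ x' := d1.comp x' (hasFDerivAt_jn x' t)
      rw [d2.fderiv, ContinuousLinearMap.comp_apply, jnL_single]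
      rfl
    have h1 : ∫ x' in diskSet, ∑ i, (fderiv ℝ w x' (Pi.single i 1)) ^ 2 =
        ∫ x' in diskSet, ∑ i : Fin 2, (grad3 Φ (jn x' t) (Fin.castSucc i)) ^ 2 :=
      setIntegral_congr_fun isOpen_disk.measurableSet fun x' hx => by
        simp only [hfd x' hx]
    rw [h1]
    refine integral_mono_of_nonneg (Filter.Eventually.of_forall fun x =>
      Finset.sum_nonneg fun _ _ => sq_nonneg _) ig (Filter.Eventually.of_forall fun x => ?_)
    simp only [hg, normSq3, Fin.sum_univ_three, Fin.sum_univ_two]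
    have := sq_nonneg (grad3 Φ (jn x t) 2)
    show (grad3 Φ (jn x t) 0) ^ 2 + (grad3 Φ (jn x t) 1) ^ 2 ≤ _
    linarith
  set K := 3 * Lam with hK
  have hK0 : 0 < K := by positivity
  have hpt : ∀ x' ∈ diskSet, |(w x' - m) * f x'| ≤
      K / (2 * Λ₀) * (w x' - m) ^ 2 + K * Λ₀ / 2 * g x' := by
    intro x' hx
    have h1 : (f x') ^ 2 ≤ K ^ 2 * g x' := Av_sq_bound _ (hAb _ (jn_mem x' t hx)) _ 2
    have h2 : |(w x' - m) * f x'| ≤ K / (2 * Λ₀) * (w x' - m) ^ 2 + Λ₀ / (2 * K) * (f x') ^ 2 := by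
      rw [abs_mul, ← sq_abs (w x' - m), ← sq_abs (f x')]
      generalize |w x' - m| = p
      generalize |f x'| = q
      have : K / (2 * Λ₀) * p ^ 2 + Λ₀ / (2 * K) * q ^ 2 - p * q =
          (K * p - Λ₀ * q) ^ 2 / (2 * K * Λ₀) := by
        field_simp
        ring
      have : 0 ≤ (K * p - Λ₀ * q) ^ 2 / (2 * K * Λ₀) := by positivity
      linarith
    have h3 : Λ₀ / (2 * K) * (f x') ^ 2 ≤ Λ₀ / (2 * K) * (K ^ 2 * g x') :=
      mul_le_mul_of_nonneg_left h1 (by positivity)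
    have h4 : Λ₀ / (2 * K) * (K ^ 2 * g x') = K * Λ₀ / 2 * g x' := by
      field_simp
    linarith
  show |∫ x' in diskSet, w x' * f x'| ≤ K * Λ₀ * ∫ x' in diskSet, g x'
  rw [hb]
  refine (abs_integral_le_integral_abs).trans ?_
  refine (setIntegral_mono_on iwmf.abs ((iw2.const_mul _).add (ig.const_mul _))
    isOpen_disk.measurableSet hpt).trans ?_
  simp only [Pi.add_apply]
  rw [integral_add (iw2.const_mul _) (ig.const_mul _), integral_const_mul, integral_const_mul]
  have h5 := mul_le_mul_of_nonneg_left hP2 (show 0 ≤ K / (2 * Λ₀) by positivity)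
  have h6 : K / (2 * Λ₀) * (Λ₀ ^ 2 * ∫ x' in diskSet, g x') =
      K * Λ₀ / 2 * ∫ x' in diskSet, g x' := by field_simp
  linarith

/-- the weighted Caccioppoli estimate in the infinite cylinder: for a
weak solution of div(A∇Φ) = 0 with conormal boundary condition, symmetric uniformly
elliptic A, and zero flux through every cross-section, one has
e^{βh} ∫_{t₁ ≤ x₃ ≤ t₂} |∇Φ|² ≤ ∫_{t₁−h ≤ x₃ ≤ t₂+h} |∇Φ|²,
with β depending only on λ, Λ and the Poincaré constant Λ₀ of the disk. -/
theorem weighted_caccioppoli_cylinder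
    (lam Lam Λ₀ : ℝ) (hlam : 0 < lam) (hlamLam : lam ≤ Lam) (hΛ₀ : 0 < Λ₀)
    -- Poincaré inequality on the unit disk with constant Λ₀
    (hPoincare : ∀ w : (Fin 2 → ℝ) → ℝ, ContDiffOn ℝ 1 w (closure diskSet) →
      ∫ x' in diskSet,
          (w x' - (∫ y' in diskSet, w y') / (volume diskSet).toReal) ^ 2
        ≤ Λ₀ ^ 2 * ∫ x' in diskSet, ∑ i, (fderiv ℝ w x' (Pi.single i 1)) ^ 2) :
    ∃ β > (0:ℝ), ∀ (A : (Fin 3 → ℝ) → Fin 3 → Fin 3 → ℝ) (Φ : (Fin 3 → ℝ) → ℝ),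
      Measurable A →
      (∀ x ∈ cylZc, ∀ i j : Fin 3, A x i j = A x j i) →
      (∀ x ∈ cylZc, ∀ ξ : Fin 3 → ℝ,
        lam * normSq3 ξ ≤ ∑ i, ∑ j, ξ i * A x i j * ξ j ∧
        ∑ i, ∑ j, ξ i * A x i j * ξ j ≤ Lam * normSq3 ξ) →
      ContDiffOn ℝ 1 Φ cylZc →
      -- weak form of div(A∇Φ) = 0 with the conormal (slip) boundary condition
      (∀ ψ : (Fin 3 → ℝ) → ℝ, ContDiff ℝ 1 ψ → HasCompactSupport ψ →
        ∫ x in cylZ, ∑ i, (∑ j, A x i j * grad3 Φ x j) * grad3 ψ x i = 0) →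
      -- zero flux through every cross-section
      (∀ t : ℝ, ∫ x' in diskSet,
        ∑ j, A (Fin.snoc x' t) 2 j * grad3 Φ (Fin.snoc x' t) j = 0) →
      ∀ t₁ t₂ h : ℝ, t₁ ≤ t₂ → 0 < h →
        Real.exp (β * h) *
            ∫ x in cylZ ∩ {x | t₁ ≤ x 2 ∧ x 2 ≤ t₂}, normSq3 (grad3 Φ x)
          ≤ ∫ x in cylZ ∩ {x | t₁ - h ≤ x 2 ∧ x 2 ≤ t₂ + h}, normSq3 (grad3 Φ x) := by
  have hLam : 0 < Lam := lt_of_lt_of_le hlam hlamLam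
  refine ⟨lam / (3 * Lam * Λ₀) / 2, by positivity, ?_⟩
  intro A Φ hA hsym hell hΦ hweak hflux t₁ t₂ h ht hh
  set β := lam / (3 * Lam * Λ₀) / 2 with hβ
  have hβ0 : 0 < β := by positivity
  have hAb : ∀ x ∈ cylZ, ∀ i j, |A x i j| ≤ Lam := fun x hx =>
    A_bound hlam (A x) (hsym x (cylZ_sub hx)) (hell x (cylZ_sub hx))
  simp only [snoc_eq_jn] at hflux
  obtain ⟨η, cη, η0, ηmid, ηout, ηd⟩ := exists_weight hβ0 ht hh
  set R : ℝ := |t₁| + |t₂| + h with hR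
  have hRout : ∀ t, R < |t| → t < t₁ - h ∨ t₂ + h < t := by
    intro t htR
    by_contra hcon
    push Not at hcon
    have : |t| ≤ R := by
      rw [abs_le, hR]
      constructor <;> linarith [neg_abs_le t₁, neg_abs_le t₂, le_abs_self t₁, le_abs_self t₂,
        abs_nonneg t₁, abs_nonneg t₂]
    linarith
  have hRη : ∀ t, R < |t| → η t = 0 ∧ deriv η t = 0 := fun t h' => ηout t (hRout t h')
  have hT := tested hA hAb hΦ hweak cη hRη
  obtain ⟨M, hM0, hM⟩ := exists_bound hΦ R
  obtain ⟨E, hE⟩ := (isCompact_Icc (a := -R) (b := R)).exists_bound_of_continuousOn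
    cη.continuous.continuousOn
  obtain ⟨E', hE'⟩ := (isCompact_Icc (a := -R) (b := R)).exists_bound_of_continuousOn
    (cη.continuous_deriv le_rfl).continuousOn
  -- the quantities involved
  set V : (Fin 3 → ℝ) → Fin 3 → ℝ := fun x i => ∑ j, A x i j * grad3 Φ x j with hV
  have hVm : ∀ i, Measurable (fun x => V x i) := fun i =>
    Finset.measurable_sum _ fun j _ =>
      ((measurable_pi_apply j).comp ((measurable_pi_apply i).comp hA)).mul (measurable_grad3 Φ j)
  set P : (Fin 3 → ℝ) → ℝ := fun x => ∑ i, V x i * grad3 Φ x i with hP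
  have hPm : Measurable P := Finset.measurable_sum _ fun i _ => (hVm i).mul (measurable_grad3 Φ i)
  set Q : (Fin 3 → ℝ) → ℝ := fun x => Φ x * V x 2 with hQ
  set N : (Fin 3 → ℝ) → ℝ := fun x => normSq3 (grad3 Φ x) with hN
  have hNm : Measurable N := measurable_normSq3 Φ
  have hΦm : AEStronglyMeasurable Φ (volume.restrict cylZ) :=
    (hΦ.continuousOn.mono cylZ_sub).aestronglyMeasurable isOpen_cylZ.measurableSet
  have bV : ∀ (M : ℝ), ∀ x ∈ cylZ, (∀ i, |grad3 Φ x i| ≤ M) → ∀ i, |V x i| ≤ 3 * (Lam * M) :=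
    fun M x hx hb i => Av_bound _ (hAb x hx) _ hb i
  have bP : ∀ (M : ℝ), 0 ≤ M → ∀ x ∈ cylZ, (∀ i, |grad3 Φ x i| ≤ M) →
      |P x| ≤ 3 * (3 * (Lam * M) * M) := by
    intro M hM0 x hx hb
    have : ∀ i, |V x i * grad3 Φ x i| ≤ 3 * (Lam * M) * M := fun i => by
      rw [abs_mul]
      exact mul_le_mul (bV M x hx hb i) (hb i) (abs_nonneg _) (by positivity)
    refine (Finset.abs_sum_le_sum_abs _ _).trans ?_
    rw [Fin.sum_univ_three]
    linarith [this 0, this 1, this 2]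
  have bQ : ∀ (M : ℝ), 0 ≤ M → ∀ x ∈ cylZ, |Φ x| ≤ M → (∀ i, |grad3 Φ x i| ≤ M) →
      |Q x| ≤ M * (3 * (Lam * M)) := by
    intro M hM0 x hx hb1 hb
    simp only [hQ]
    rw [abs_mul]
    exact mul_le_mul hb1 (bV M x hx hb 2) (abs_nonneg _) hM0
  have lowP : ∀ x ∈ cylZ, lam * N x ≤ P x := by
    intro x hx
    refine ((hell x (cylZ_sub hx) (grad3 Φ x)).1).trans (le_of_eq ?_)
    simp only [hP, hV, Fin.sum_univ_three]
    ring
  -- the tested identity on slices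
  have iL : IntegrableOn (fun x => η (x 2) * P x + deriv η (x 2) * Q x) cylZ := by
    refine integrableOn_bound (R := R)
      (C := E * (3 * (3 * (Lam * M) * M)) + E' * (M * (3 * (Lam * M)))) ?_ ?_ ?_
    · refine AEStronglyMeasurable.add ?_ ?_
      · exact ((cη.continuous.measurable.comp (measurable_pi_apply 2)).mul hPm).aestronglyMeasurable
      · exact (((cη.continuous_deriv le_rfl).measurable.comp
          (measurable_pi_apply 2)).aestronglyMeasurable).mul
          (hΦm.mul (hVm 2).aestronglyMeasurable)
    · intro x hx hxR
      have e1 : |η (x 2)| ≤ E := hE _ (abs_le.1 hxR)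
      have e2 : |deriv η (x 2)| ≤ E' := hE' _ (abs_le.1 hxR)
      refine (abs_add_le _ _).trans (add_le_add ?_ ?_)
      · rw [abs_mul]
        exact mul_le_mul e1 (bP M hM0 x hx (hM x hx hxR).2) (abs_nonneg _) ((abs_nonneg _).trans e1)
      · rw [abs_mul]
        exact mul_le_mul e2 (bQ M hM0 x hx (hM x hx hxR).1 (hM x hx hxR).2) (abs_nonneg _)
          ((abs_nonneg _).trans e2)
    · intro x _ hxR
      rw [(hRη _ hxR).1, (hRη _ hxR).2]; simp
  obtain ⟨fL, gL⟩ := fubini_cyl iL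
  have hT' : ∫ t : ℝ, ∫ x' in diskSet, (η ((jn x' t) 2) * P (jn x' t) +
      deriv η ((jn x' t) 2) * Q (jn x' t)) = 0 := by rw [← fL]; exact hT
  -- the two energies on slices
  set Sm : Set (Fin 3 → ℝ) := {x | t₁ ≤ x 2 ∧ x 2 ≤ t₂} with hSm
  set Sa : Set (Fin 3 → ℝ) := {x | t₁ - h ≤ x 2 ∧ x 2 ≤ t₂ + h} with hSa
  have mSm : MeasurableSet Sm :=
    measurableSet_preimage (f := fun x : Fin 3 → ℝ => x 2)
      (measurable_pi_apply (2 : Fin 3)) (measurableSet_Icc (a := t₁) (b := t₂))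
  have mSa : MeasurableSet Sa :=
    measurableSet_preimage (f := fun x : Fin 3 → ℝ => x 2)
      (measurable_pi_apply (2 : Fin 3)) (measurableSet_Icc (a := (t₁ - h)) (b := (t₂ + h)))
  have hsub : Sm ⊆ Sa := fun x hx => ⟨by linarith [hx.1], by linarith [hx.2]⟩
  have iInd : ∀ S : Set (Fin 3 → ℝ), MeasurableSet S → S ⊆ Sa →
      IntegrableOn (S.indicator N) cylZ := by
    intro S mS hS
    refine integrableOn_bound (R := R) (C := 3 * M ^ 2)
      (hNm.indicator mS).aestronglyMeasurable ?_ ?_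
    · intro x hx hxR
      by_cases hxS : x ∈ S
      · rw [indicator_of_mem hxS]; exact normSq3_le (hM x hx hxR).2
      · rw [indicator_of_notMem hxS]; simp; positivity
    · intro x _ hxR
      refine indicator_of_notMem (fun hxS => ?_) _
      have := hS hxS
      rcases hRout _ hxR with h' | h'
      · linarith [this.1]
      · linarith [this.2]
  have iD : IntegrableOn (fun x => exp (β * h) * Sm.indicator N x - Sa.indicator N x) cylZ :=
    ((iInd Sm mSm hsub).const_mul _).sub (iInd Sa mSa subset_rfl)
  obtain ⟨fD, gD⟩ := fubini_cyl iD
  rw [integral_sub ((iInd Sm mSm hsub).const_mul _) (iInd Sa mSa subset_rfl), integral_const_mul,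
    setIntegral_indicator mSm, setIntegral_indicator mSa] at fD
  -- slice-wise comparison
  have hcmp : ∀ t : ℝ,
      lam * ∫ x' in diskSet, (exp (β * h) * Sm.indicator N (jn x' t) - Sa.indicator N (jn x' t)) ≤
      ∫ x' in diskSet, (η ((jn x' t) 2) * P (jn x' t) + deriv η ((jn x' t) 2) * Q (jn x' t)) := by
    intro t
    obtain ⟨M', hM0', hM'⟩ := exists_bound hΦ |t|
    have hb : ∀ x' ∈ diskSet, |Φ (jn x' t)| ≤ M' ∧ ∀ i, |grad3 Φ (jn x' t) i| ≤ M' :=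
      fun x' hx => hM' _ (jn_mem x' t hx) le_rfl
    have hjm : Measurable (fun x' => jn x' t) := (continuous_jn t).measurable
    have iN : IntegrableOn (fun x' => N (jn x' t)) diskSet :=
      integrableOn_disk (hNm.comp hjm).aestronglyMeasurable
        fun x' hx => normSq3_le (hb x' hx).2
    have iP : IntegrableOn (fun x' => P (jn x' t)) diskSet :=
      integrableOn_disk (hPm.comp hjm).aestronglyMeasurable
        fun x' hx => bP M' hM0' _ (jn_mem x' t hx) (hb x' hx).2
    have iQ : IntegrableOn (fun x' => Q (jn x' t)) diskSet := by
      refine integrableOn_disk (AEStronglyMeasurable.mul (f := fun x' => Φ (jn x' t))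
        (g := fun x' => V (jn x' t) 2) ?_ ((hVm 2).comp hjm).aestronglyMeasurable)
        fun x' hx => bQ M' hM0' _ (jn_mem x' t hx) (hb x' hx).1 (hb x' hx).2
      refine ContinuousOn.aestronglyMeasurable ?_ isOpen_disk.measurableSet
      exact (hΦ.continuousOn.mono cylZ_sub).comp (continuous_jn t).continuousOn
        fun x' hx => jn_mem x' t hx
    have hb1 : |∫ x' in diskSet, Q (jn x' t)| ≤
        3 * Lam * Λ₀ * ∫ x' in diskSet, N (jn x' t) :=
      slice hLam hΛ₀ hPoincare hA hAb hΦ t (hflux t)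
    have ha1 : lam * ∫ x' in diskSet, N (jn x' t) ≤ ∫ x' in diskSet, P (jn x' t) := by
      rw [← integral_const_mul]
      exact setIntegral_mono_on (iN.const_mul _) iP isOpen_disk.measurableSet
        fun x' hx => lowP _ (jn_mem x' t hx)
    have he0 : 0 ≤ ∫ x' in diskSet, N (jn x' t) :=
      integral_nonneg fun x' => Finset.sum_nonneg fun _ _ => sq_nonneg _
    have hr : ∫ x' in diskSet, (η ((jn x' t) 2) * P (jn x' t) +
        deriv η ((jn x' t) 2) * Q (jn x' t)) =
        η t * (∫ x' in diskSet, P (jn x' t)) + deriv η t * ∫ x' in diskSet, Q (jn x' t) := by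
      rw [← integral_const_mul, ← integral_const_mul,
        ← integral_add (iP.const_mul _) (iQ.const_mul _)]
      rfl
    rw [hr]
    set e := ∫ x' in diskSet, N (jn x' t) with he
    set a := ∫ x' in diskSet, P (jn x' t)
    set b := ∫ x' in diskSet, Q (jn x' t)
    have hKβ : 2 * β * (3 * Lam * Λ₀) = lam := by rw [hβ]; field_simp
    have h1 : η t * (lam * e) ≤ η t * a := mul_le_mul_of_nonneg_left ha1 (η0 t)
    have h2 : |deriv η t * b| ≤ |deriv η t| * (3 * Lam * Λ₀ * e) := by
      rw [abs_mul]; exact mul_le_mul_of_nonneg_left hb1 (abs_nonneg _)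
    have h3 := (abs_le.1 h2).1
    by_cases c1 : t₁ ≤ t ∧ t ≤ t₂
    · have hl : ∫ x' in diskSet, (exp (β * h) * Sm.indicator N (jn x' t) -
          Sa.indicator N (jn x' t)) = (exp (β * h) - 1) * e := by
        rw [he, ← integral_const_mul]
        congr 1; ext x'
        rw [indicator_of_mem (show jn x' t ∈ Sm from c1),
          indicator_of_mem (hsub (show jn x' t ∈ Sm from c1))]
        ring
      rw [hl]
      obtain ⟨e1, e2⟩ := ηmid t c1.1 c1.2
      rw [e1] at h1 ⊢
      rw [e2]
      linarith
    · by_cases c2 : t₁ - h ≤ t ∧ t ≤ t₂ + h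
      · have hl : ∫ x' in diskSet, (exp (β * h) * Sm.indicator N (jn x' t) -
            Sa.indicator N (jn x' t)) = (-1) * e := by
          rw [he, ← integral_const_mul]
          congr 1; ext x'
          rw [indicator_of_notMem (show jn x' t ∉ Sm from c1),
            indicator_of_mem (show jn x' t ∈ Sa from c2)]
          ring
        rw [hl]
        have h4 : |deriv η t| * (3 * Lam * Λ₀ * e) ≤ 2 * β * (η t + 1) * (3 * Lam * Λ₀ * e) :=
          mul_le_mul_of_nonneg_right (ηd t) (by positivity)
        have h5 : 2 * β * (η t + 1) * (3 * Lam * Λ₀ * e) = lam * ((η t + 1) * e) := by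
          rw [← hKβ]; ring
        linarith
      · have hl : ∫ x' in diskSet, (exp (β * h) * Sm.indicator N (jn x' t) -
            Sa.indicator N (jn x' t)) = 0 * e := by
          rw [he, ← integral_const_mul]
          congr 1; ext x'
          rw [indicator_of_notMem (show jn x' t ∉ Sm from c1),
            indicator_of_notMem (show jn x' t ∉ Sa from c2)]
          ring
        rw [hl]
        have hout : t < t₁ - h ∨ t₂ + h < t := by
          by_contra hcon
          push Not at hcon
          exact c2 hcon
        rw [(ηout t hout).1, (ηout t hout).2]
        simp
  have hfin := integral_mono (gD.const_mul lam) gL hcmp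
  rw [hT', integral_const_mul, ← fD] at hfin
  by_contra hcon
  push Not at hcon
  have := mul_pos hlam (sub_pos.2 hcon)
  linarith
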